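/- Let G be a finitely generated Coxeter group. Then Out(G) is residually finite and virtually torsion-free (i.e. Out(G) has a finite-index subgroup containing no nontrivial element of finite order). -/

import Mathlib

section Defs

variable (G : Type*) [Group G]

/-- The subgroup of inner automorphisms of `G`. -/
def Inn : Subgroup (MulAut G) := (MulAut.conj : G →* MulAut G).range

instance Inn.normal : (Inn G).Normal := by
  constructor
  intro n hn φ
  obtain ⟨g, rfl⟩ := hn
  refine ⟨φ g, ?_⟩
  ext x
  simp only [MulAut.conj_apply, MulAut.mul_apply, map_mul, map_inv, MulAut.inv_def,
    MulEquiv.apply_symm_apply]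

/-- The outer automorphism group `Out(G) = Aut(G)/Inn(G)`. -/
def Out := MulAut G ⧸ Inn G

instance : Group (Out G) := inferInstanceAs (Group (MulAut G ⧸ Inn G))

/-- The canonical projection `Aut(G) → Out(G)`. -/
def outProj : MulAut G →* Out G := QuotientGroup.mk' (Inn G)

/-- A surjective homomorphism `f : A → B` splits virtually if it admits a section on some
finite-index subgroup of `B`. -/
def SplitsVirtually {A B : Type*} [Group A] [Group B] (f : A →* B) : Prop :=
  ∃ B' : Subgroup B, B'.FiniteIndex ∧ ∃ s : (↥B') →* A, ∀ x : B', f (s x) = (x : B)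

/-- A group is residually finite if every nontrivial element survives in some finite quotient. -/
def ResiduallyFinite (G : Type*) [Group G] : Prop :=
  ∀ g : G, g ≠ 1 → ∃ (F : Type) (_ : Group F) (_ : Finite F) (φ : G →* F), φ g ≠ 1

/-- A group is residually `p` if every nontrivial element survives in some finite `p`-group
quotient. -/
def ResiduallyP (p : ℕ) (G : Type*) [Group G] : Prop :=
  ∀ g : G, g ≠ 1 →
    ∃ (F : Type) (_ : Group F) (_ : Finite F) (φ : G →* F), IsPGroup p F ∧ φ g ≠ 1

/-- A group is virtually residually `p` if some finite-index subgroup is residually `p`. -/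
def VirtuallyResiduallyP (p : ℕ) (G : Type*) [Group G] : Prop :=
  ∃ K : Subgroup G, K.FiniteIndex ∧ ResiduallyP p ↥K

/-- `Aut_{H̲}(G)`: the subgroup of automorphisms of `G` fixing `H` pointwise. -/
def autFix (H : Subgroup G) : Subgroup (MulAut G) where
  carrier := {φ | ∀ h ∈ H, φ h = h}
  one_mem' := fun _ _ => rfl
  mul_mem' := by
    intro a b ha hb h hh
    show a (b h) = h
    rw [hb h hh, ha h hh]
  inv_mem' := by
    intro a ha h hh
    show a⁻¹ h = h
    calc a⁻¹ h = a⁻¹ (a h) := by rw [ha h hh]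
    _ = h := by rw [MulAut.inv_def]; exact a.symm_apply_apply h

/-- `Aut_H(G)`: the subgroup of automorphisms of `G` mapping `H` onto itself. -/
def autSetwise (H : Subgroup G) : Subgroup (MulAut G) where
  carrier := {φ | ∀ g : G, φ g ∈ H ↔ g ∈ H}
  one_mem' := fun _ => Iff.rfl
  mul_mem' := by
    intro a b ha hb g
    show a (b g) ∈ H ↔ g ∈ H
    rw [ha, hb]
  inv_mem' := by
    intro a ha g
    show a⁻¹ g ∈ H ↔ g ∈ H
    have h1 : a (a⁻¹ g) = g := by rw [MulAut.inv_def]; exact a.apply_symm_apply g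
    have := ha (a⁻¹ g)
    rw [h1] at this
    exact this.symm

theorem mem_autSetwise {H : Subgroup G} {φ : MulAut G} :
    φ ∈ autSetwise G H ↔ ∀ g : G, φ g ∈ H ↔ g ∈ H := Iff.rfl

/-- `H` is an Aut-splitting subgroup of `G` if the restriction of `Aut(G) → Out(G)` to
`Aut_{H̲}(G)` has finite kernel and an image of finite index in `Out(G)`. -/
def IsAutSplitting (H : Subgroup G) : Prop :=
  Finite ((outProj G).comp (autFix G H).subtype).ker ∧
    ((autFix G H).map (outProj G)).FiniteIndex

/-- The conjugate `gKg⁻¹` of a subgroup. -/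
def conjSubgroup (g : G) (K : Subgroup G) : Subgroup G :=
  K.map (MulAut.conj g).toMonoidHom

end Defs

/-!
Let `H` be a maximal finite subgroup of the Coxeter group `G`. It has finite centralizer: `H` fixes
a point `x` in the interior of the Tits cone, and if `c` centralizes `H` and some wall separates `x`
from its `c`-translate, or passes through the latter but not through `x`, then that wall meets the
segment joining them in a point fixed by `H`, and the reflection in it contradicts maximality. Hence
`c` has bounded length. Moreover, every finite subgroup is conjugate into a finite standard
parabolic subgroup, so finite subgroups form finitely many conjugacy classes, and an automorphism of
`G` has finitely many possible effects on `H` up to inner automorphisms. Consequently the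
automorphisms fixing `H` pointwise map to `Out(G)` with finite kernel and finite-index image, and it
suffices to prove the two properties for `Aut(G)`.

Since the coefficients `2 cos (π / m)` of the geometric representation are algebraic integers, `G`
embeds into some `GL(n, ℤ)` and is therefore virtually residually `l` for every prime `l`. In
particular `G` is residually finite, and then so is `Aut(G)`. Finally, let `N` be a finitely
generated residually `l` characteristic subgroup of finite index. An automorphism of order `p ≠ l`
that acts trivially on `G ⧸ N` and on the largest elementary abelian `l`-quotient of `N` is trivial,
so `Aut(G)` has a finite-index subgroup without `p`-torsion for all primes `p ≠ l`. Intersecting the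
subgroups for `l = 2` and `l = 3` removes all torsion.
-/

section ResidualFiniteness

theorem residuallyFinite_iff {G : Type*} [Group G] :
    ResiduallyFinite G ↔ Group.ResiduallyFinite G := by
  refine ⟨Group.residuallyFinite_of_forall_exists_finite_monoidHom, fun _ g hg => ?_⟩
  obtain ⟨N, hgN⟩ := Group.exists_finiteIndexNormalSubgroup_notMem g hg
  let φ : G →* Shrink.{0} (G ⧸ N.toSubgroup) :=
    Shrink.mulEquiv.symm.toMonoidHom.comp (QuotientGroup.mk' N.toSubgroup)
  refine ⟨_, inferInstance, inferInstance, φ, fun hφ => hgN ?_⟩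
  have hg' : QuotientGroup.mk' N.toSubgroup g = 1 := by
    simpa only [φ, MonoidHom.comp_apply, MulEquiv.toMonoidHom_eq_coe, MonoidHom.coe_coe,
      EmbeddingLike.map_eq_one_iff] using hφ
  exact (QuotientGroup.eq_one_iff g).mp hg'

theorem residuallyFinite_of_finite_ker_of_finiteIndex_range {A Q : Type*} [Group A] [Group Q]
    [Group.ResiduallyFinite A] (f : A →* Q) [Finite f.ker] [f.range.FiniteIndex] :
    Group.ResiduallyFinite Q := by
  rw [Group.residuallyFinite_iff_exists_finiteIndex]
  intro x hx
  by_cases hxf : x ∈ f.range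
  swap
  · exact ⟨f.range, inferInstance, hxf⟩
  obtain ⟨a, rfl⟩ := hxf
  have hak (k : f.ker) : a * k ≠ 1 := fun h => hx <| by
    rw [eq_inv_of_mul_eq_one_left h, map_inv, k.2, inv_one]
  choose N hN haN using fun k : f.ker =>
    Group.residuallyFinite_iff_exists_finiteIndex.mp ‹_› (a * k) (hak k)
  have : (⨅ k, N k).FiniteIndex := Subgroup.finiteIndex_iInf hN
  refine ⟨(⨅ k, N k).map f, ?_, ?_⟩
  · rw [Subgroup.finiteIndex_iff, Subgroup.index_map]
    have := Subgroup.finiteIndex_of_le (le_sup_left : ⨅ k, N k ≤ (⨅ k, N k) ⊔ f.ker)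
    exact mul_ne_zero Subgroup.FiniteIndex.index_ne_zero Subgroup.FiniteIndex.index_ne_zero
  · rintro ⟨n, hn, hna⟩
    have hk : a⁻¹ * n ∈ f.ker := by rw [MonoidHom.mem_ker, map_mul, map_inv, hna, inv_mul_cancel]
    refine haN ⟨_, hk⟩ ?_
    rw [mul_inv_cancel_left]
    exact Subgroup.mem_iInf.mp hn _

end ResidualFiniteness

section VirtuallyTorsionFree

/-- A group is virtually torsion-free if it has a finite-index subgroup without nontrivial elements
of finite order. -/
def VirtuallyTorsionFree (G : Type*) [Group G] : Prop :=
  ∃ O : Subgroup G, O.FiniteIndex ∧ ∀ x ∈ O, IsOfFinOrder x → x = 1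

theorem VirtuallyTorsionFree.subgroup {G : Type*} [Group G] (hG : VirtuallyTorsionFree G)
    (H : Subgroup G) : VirtuallyTorsionFree H := by
  obtain ⟨O, hO, htf⟩ := hG
  exact ⟨O.subgroupOf H, inferInstance, fun x hx hfin =>
    Subtype.ext (htf x hx (Submonoid.isOfFinOrder_coe.mpr hfin))⟩

theorem VirtuallyTorsionFree.of_finite_ker_of_finiteIndex_range {A Q : Type*} [Group A] [Group Q]
    (hA : VirtuallyTorsionFree A) (f : A →* Q) [Finite f.ker] [f.range.FiniteIndex] :
    VirtuallyTorsionFree Q := by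
  obtain ⟨O, hO, htf⟩ := hA
  refine ⟨O.map f, ?_, ?_⟩
  · rw [Subgroup.finiteIndex_iff, Subgroup.index_map]
    have := Subgroup.finiteIndex_of_le (le_sup_left : O ≤ O ⊔ f.ker)
    exact mul_ne_zero Subgroup.FiniteIndex.index_ne_zero Subgroup.FiniteIndex.index_ne_zero
  · rintro _ ⟨a, ha, rfl⟩ hfa
    obtain ⟨n, hn, hfan⟩ := isOfFinOrder_iff_pow_eq_one.mp hfa
    have hker : a ^ n ∈ f.ker := by rw [MonoidHom.mem_ker, map_pow, hfan]
    have han : IsOfFinOrder (a ^ n) :=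
      Submonoid.isOfFinOrder_coe.mpr (isOfFinOrder_of_finite (⟨a ^ n, hker⟩ : f.ker))
    rw [htf a ha (han.of_pow hn.ne'), map_one]

end VirtuallyTorsionFree

section CharacteristicSubgroups

/-- The intersection of the kernels of all homomorphisms `Γ →* F`. It is a characteristic subgroup,
of finite index when `Γ` is finitely generated and `F` is finite. -/
def charKer (Γ F : Type*) [Group Γ] [Group F] : Subgroup Γ := ⨅ φ : Γ →* F, φ.ker

variable {G F : Type*} [Group G] [Group F]

theorem mem_charKer {g : G} : g ∈ charKer G F ↔ ∀ φ : G →* F, φ g = 1 := by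
  simp only [charKer, Subgroup.mem_iInf, MonoidHom.mem_ker]

instance charKer.characteristic : (charKer G F).Characteristic :=
  Subgroup.characteristic_iff_le_comap.mpr fun e _ hg =>
    mem_charKer.mpr fun φ => mem_charKer.mp hg (φ.comp e.toMonoidHom)

theorem finite_monoidHom [Group.FG G] [Finite F] : Finite (G →* F) := by
  obtain ⟨S, hS, hfin⟩ := Group.fg_iff.mp ‹Group.FG G›
  have := hfin.to_subtype
  exact Finite.of_injective (fun (φ : G →* F) (s : S) => φ s) fun φ ψ h =>
    MonoidHom.eq_of_eqOn_dense hS fun x hx => congrFun h ⟨x, hx⟩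

instance charKer.finiteIndex [Group.FG G] [Finite F] : (charKer G F).FiniteIndex := by
  have : Finite (G →* F) := finite_monoidHom
  exact Subgroup.finiteIndex_iInf fun φ => inferInstance

theorem isPGroup_quotient_charKer {p : ℕ} [Fact p.Prime] [Finite F] (hF : IsPGroup p F) :
    IsPGroup p (G ⧸ charKer G F) := by
  obtain ⟨n, hn⟩ := IsPGroup.iff_card.mp hF
  intro x
  obtain ⟨x, rfl⟩ := QuotientGroup.mk'_surjective _ x
  refine ⟨n, (QuotientGroup.eq_one_iff _).mpr (mem_charKer.mpr fun φ => ?_)⟩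
  rw [map_pow, ← hn, pow_card_eq_one']

theorem exists_characteristic_finiteIndex_le [Group.FG G] (K : Subgroup G) [K.FiniteIndex] :
    ∃ N ≤ K, N.Characteristic ∧ N.FiniteIndex := by
  refine ⟨charKer G (G ⧸ K.normalCore), fun g hg => ?_, inferInstance, inferInstance⟩
  refine K.normalCore_le ?_
  rw [← QuotientGroup.ker_mk' K.normalCore]
  exact mem_charKer.mp hg _

/-- The action of `Aut(G)` on the quotient of `G` by a characteristic subgroup. -/
def mulAutQuotient (N : Subgroup G) [N.Characteristic] : MulAut G →* MulAut (G ⧸ N) where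
  toFun α := QuotientGroup.congr N N α (Subgroup.characteristic_iff_map_eq.mp ‹_› α)
  map_one' := by ext ⟨g⟩; rfl
  map_mul' α β := by ext ⟨g⟩; rfl

theorem mulAutQuotient_mk (N : Subgroup G) [N.Characteristic] (α : MulAut G) (g : G) :
    mulAutQuotient N α (g : G ⧸ N) = (α g : G) := rfl

theorem mem_ker_mulAutQuotient {N : Subgroup G} [N.Characteristic] {α : MulAut G} :
    α ∈ (mulAutQuotient N).ker ↔ ∀ g : G, α g / g ∈ N := by
  simp only [MonoidHom.mem_ker, MulEquiv.ext_iff, QuotientGroup.forall_mk, mulAutQuotient_mk,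
    MulAut.one_apply, QuotientGroup.eq_iff_div_mem]

/-- Baumslag's theorem: the actions of `Aut(G)` on the finite quotients of `G` by the characteristic
subgroups `charKer G F` separate automorphisms. -/
theorem residuallyFinite_mulAut [Group.FG G] [Group.ResiduallyFinite G] :
    Group.ResiduallyFinite (MulAut G) := by
  rw [Group.residuallyFinite_iff_exists_finiteIndex]
  intro α hα
  obtain ⟨g, hg⟩ : ∃ g, α g ≠ g := by
    by_contra! h
    exact hα (MulEquiv.ext h)
  obtain ⟨K, hK, hgK⟩ :=
    Group.residuallyFinite_iff_exists_finiteIndex.mp ‹_› (α g / g) (div_ne_one.mpr hg)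
  obtain ⟨N, hNK, hN, hN'⟩ := exists_characteristic_finiteIndex_le K
  exact ⟨(mulAutQuotient N).ker, inferInstance,
    fun hαN => hgK (hNK (mem_ker_mulAutQuotient.mp hαN g))⟩

end CharacteristicSubgroups

section CoprimeAutomorphisms

variable {l p : ℕ} [Fact l.Prime] [Fact p.Prime]

theorem exists_le_normal_index_eq_of_isPGroup {P : Type*} [Group P] [Finite P] (hP : IsPGroup l P)
    {C : Subgroup P} (hC : C ≠ ⊤) : ∃ M : Subgroup P, C ≤ M ∧ M.Normal ∧ M.index = l := by
  have hl : l.Prime := Fact.out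
  obtain ⟨m, hm⟩ := IsPGroup.iff_card.mp (hP.to_subgroup C)
  obtain ⟨n, hn⟩ := IsPGroup.iff_card.mp hP
  have hmn : m < n := by
    rw [← Nat.pow_lt_pow_iff_right hl.one_lt, ← hm, ← hn]
    exact lt_of_le_of_ne C.card_le_card_group fun h => hC (C.eq_top_of_card_eq h)
  obtain ⟨k, rfl⟩ := Nat.exists_eq_add_one.mpr (Nat.zero_lt_of_lt hmn)
  obtain ⟨M, hM, hCM⟩ := Sylow.exists_subgroup_card_pow_prime_le l
    (hn ▸ pow_dvd_pow l k.le_succ) C hm (Nat.le_of_lt_succ hmn)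
  have hindex : M.index = l := by
    have := M.card_mul_index
    rw [hM, hn, pow_succ] at this
    exact Nat.eq_of_mul_eq_mul_left (pow_pos hl.pos k) this
  refine ⟨M, hCM, Subgroup.normal_of_index_eq_minFac_card ?_, hindex⟩
  rw [hindex, hn, hl.pow_minFac k.succ_ne_zero]

theorem exists_hom_zmod_le_ker_of_isPGroup {P : Type*} [Group P] [Finite P] (hP : IsPGroup l P)
    {C : Subgroup P} (hC : C ≠ ⊤) :
    ∃ ψ : P →* Multiplicative (ZMod l), C ≤ ψ.ker ∧ ψ.ker ≠ ⊤ := by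
  obtain ⟨M, hCM, hM, hindex⟩ := exists_le_normal_index_eq_of_isPGroup hP hC
  have : IsCyclic (P ⧸ M) := isCyclic_of_prime_card hindex
  let e : P ⧸ M ≃* Multiplicative (ZMod l) := mulEquivOfCyclicCardEq <| by
    rw [Nat.card_congr Multiplicative.toAdd, Nat.card_zmod]
    exact hindex
  have hker : (e.toMonoidHom.comp (QuotientGroup.mk' M)).ker = M := by
    ext x
    rw [MonoidHom.mem_ker, MonoidHom.comp_apply, MulEquiv.toMonoidHom_eq_coe, MonoidHom.coe_coe,
      EmbeddingLike.map_eq_one_iff, ← MonoidHom.mem_ker, QuotientGroup.ker_mk']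
  refine ⟨e.toMonoidHom.comp (QuotientGroup.mk' M), hker.symm ▸ hCM, hker.symm ▸ fun h => ?_⟩
  rw [h, Subgroup.index_top] at hindex
  exact (Fact.out : l.Prime).one_lt.ne hindex

/-- If the fixed subgroup `C` of `a` were proper, it would lie in the kernel of a character `ψ`
taking a nontrivial value. The corresponding fibre of `ψ` is `a`-invariant and has `l`-power
cardinality, so it contains a fixed point of `a`, contradicting `C ≤ ker ψ`. -/
theorem eq_one_of_isPGroup_of_pow_eq_one {P : Type*} [Group P] [Finite P] (hP : IsPGroup l P)
    (hpl : p ≠ l) {a : MulAut P} (ha : a ^ p = 1)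
    (hfix : ∀ (ψ : P →* Multiplicative (ZMod l)) (x : P), ψ (a x) = ψ x) : a = 1 := by
  by_contra hne
  have hC : (a.toMonoidHom).eqLocus (MonoidHom.id P) ≠ ⊤ := fun h =>
    hne (MulEquiv.ext fun x => (Subgroup.eq_top_iff' _).mp h x)
  obtain ⟨ψ, hCψ, hψ⟩ := exists_hom_zmod_le_ker_of_isPGroup hP hC
  obtain ⟨z, hz⟩ : ∃ z, z ∉ ψ.ker := by
    by_contra! h
    exact hψ (ψ.ker.eq_top_iff'.mpr h)
  let X := {y : P // ψ y = ψ z}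
  let σ : Equiv.Perm X := (MulAut.toPerm P a).subtypePerm fun y => Eq.congr_left (hfix ψ y)
  have hcard : ¬ p ∣ Nat.card X := by
    obtain ⟨n, hn⟩ := IsPGroup.iff_card.mp (hP.to_subgroup ψ.ker)
    rw [show Nat.card X = l ^ n from (Nat.card_congr (ψ.fiberEquivKer z)).trans hn]
    exact fun h => hpl ((Nat.prime_dvd_prime_iff_eq Fact.out Fact.out).mp
      (Nat.Prime.dvd_of_dvd_pow Fact.out h))
  have hσ : σ ^ p ^ 1 = 1 := by
    have haP : MulAut.toPerm P a ^ p = 1 := by rw [← map_pow, ha, map_one]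
    ext y
    rw [pow_one, show σ ^ p = _ from Equiv.Perm.subtypePerm_pow _ p _]
    exact DFunLike.congr_fun haP y.1
  have := Fintype.ofFinite X
  rw [Nat.card_eq_fintype_card] at hcard
  obtain ⟨y, hy⟩ := Equiv.Perm.exists_fixed_point_of_prime hcard hσ
  have hyψ : ψ y = 1 := hCψ (congrArg Subtype.val hy)
  exact hz (y.2.symm.trans hyψ)

end CoprimeAutomorphisms

section ResiduallyP

variable {l p : ℕ}

theorem ResiduallyP.of_injective {G H : Type*} [Group G] [Group H] (hG : ResiduallyP l G)
    {f : H →* G} (hf : Function.Injective f) : ResiduallyP l H := by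
  intro h hh
  obtain ⟨P, _, _, θ, hP, hθ⟩ := hG (f h) ((map_ne_one_iff f hf).mpr hh)
  exact ⟨P, _, ‹_›, θ.comp f, hP, hθ⟩

theorem VirtuallyResiduallyP.of_injective {G H : Type*} [Group G] [Group H]
    (hG : VirtuallyResiduallyP l G) {f : H →* G} (hf : Function.Injective f) :
    VirtuallyResiduallyP l H := by
  obtain ⟨K, hK, hKl⟩ := hG
  refine ⟨K.comap f, ⟨?_⟩, hKl.of_injective (f := f.subgroupComap K) ?_⟩
  · rw [Subgroup.index_comap]
    exact (K.instFiniteIndex_subgroupOf f.range).index_ne_zero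
  · exact fun x y hxy => Subtype.ext (hf (congrArg Subtype.val hxy))

theorem VirtuallyResiduallyP.residuallyFinite {G : Type*} [Group G]
    (hG : VirtuallyResiduallyP l G) : Group.ResiduallyFinite G := by
  obtain ⟨K, hK, hKl⟩ := hG
  have : Group.ResiduallyFinite K := residuallyFinite_iff.mp fun k hk =>
    let ⟨P, hP, hP', θ, _, hθ⟩ := hKl k hk
    ⟨P, hP, hP', θ, hθ⟩
  have : K.subtype.range.FiniteIndex := K.range_subtype.symm ▸ hK
  have : Finite K.subtype.ker := K.ker_subtype.symm ▸ inferInstance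
  exact residuallyFinite_of_finite_ker_of_finiteIndex_range K.subtype

variable [Fact l.Prime] [Fact p.Prime]

theorem ResiduallyP.eq_one_of_pow_eq_one {G : Type*} [Group G] (hG : ResiduallyP l G)
    (hpl : p ≠ l) {g : G} (hg : g ^ p = 1) : g = 1 := by
  by_contra hne
  obtain ⟨P, _, _, θ, hP, hθ⟩ := hG g hne
  obtain ⟨n, hn⟩ := hP (θ g)
  have hcop : Nat.Coprime p (l ^ n) :=
    Nat.Coprime.pow_right n ((Nat.coprime_primes Fact.out Fact.out).mpr hpl)
  refine hθ (orderOf_eq_one_iff.mp (Nat.eq_one_of_dvd_coprimes hcop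
    (orderOf_dvd_of_pow_eq_one ?_) (orderOf_dvd_of_pow_eq_one hn)))
  rw [← map_pow, hg, map_one]

theorem ResiduallyP.mulAut_eq_one_of_pow_eq_one {K : Type*} [Group K] [Group.FG K]
    (hK : ResiduallyP l K) (hpl : p ≠ l) {α : MulAut K} (hαp : α ^ p = 1)
    (hα : α ∈ (mulAutQuotient (charKer K (Multiplicative (ZMod l)))).ker) : α = 1 := by
  ext k
  by_contra hne
  obtain ⟨P, _, _, θ, hP, hθ⟩ := hK (α k / k) (div_ne_one.mpr hne)
  have hker : mulAutQuotient (charKer K P) α = 1 := by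
    refine eq_one_of_isPGroup_of_pow_eq_one (isPGroup_quotient_charKer hP) hpl ?_ ?_
    · rw [← map_pow, hαp, map_one]
    · rintro ψ ⟨x⟩
      have hx := mem_charKer.mp (mem_ker_mulAutQuotient.mp hα x)
        (ψ.comp (QuotientGroup.mk' (charKer K P)))
      rwa [map_div, div_eq_one] at hx
  exact hθ (mem_charKer.mp (mem_ker_mulAutQuotient.mp hker k) θ)

/-- Writing `c = α g / g ∈ N`, the automorphism `α` fixes `N` pointwise, so `α ^ n` maps `g` to
`c ^ n * g`; hence `c` is `p`-torsion. -/
theorem ResiduallyP.eq_one_of_restrict_mem_ker {G : Type*} [Group G] {N : Subgroup G}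
    [N.Characteristic] [Group.FG N] (hN : ResiduallyP l N) (hpl : p ≠ l) {α : MulAut G}
    (hαp : α ^ p = 1) (hα : α ∈ (mulAutQuotient N).ker)
    (hα' : MulAut.characteristic N α ∈
      (mulAutQuotient (charKer N (Multiplicative (ZMod l)))).ker) : α = 1 := by
  have hrestrict : MulAut.characteristic N α = 1 :=
    hN.mulAut_eq_one_of_pow_eq_one hpl (by rw [← map_pow, hαp, map_one]) hα'
  have hfix (k : N) : α k = k := congrArg Subtype.val (DFunLike.congr_fun hrestrict k)
  ext g
  let c : N := ⟨α g / g, mem_ker_mulAutQuotient.mp hα g⟩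
  have hpow (n : ℕ) : (α ^ n) g = c ^ n * g := by
    induction n with
    | zero => simp only [pow_zero, MulAut.one_apply, one_mul]
    | succ n ih =>
      rw [pow_succ', MulAut.mul_apply, ih, map_mul, map_pow, hfix, pow_succ, mul_assoc,
        div_mul_cancel]
  have hc : c = 1 := hN.eq_one_of_pow_eq_one hpl <| Subtype.ext <| by
    simpa only [hαp, MulAut.one_apply, right_eq_mul, Subgroup.coe_pow,
      Subgroup.coe_one] using hpow p
  exact div_eq_one.mp (congrArg Subtype.val hc)

theorem VirtuallyResiduallyP.exists_finiteIndex_mulAut {G : Type*} [Group G] [Group.FG G]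
    (hG : VirtuallyResiduallyP l G) :
    ∃ D : Subgroup (MulAut G), D.FiniteIndex ∧
      ∀ p : ℕ, p.Prime → p ≠ l → ∀ α ∈ D, α ^ p = 1 → α = 1 := by
  obtain ⟨K, hK, hKl⟩ := hG
  obtain ⟨N, hNK, _, _⟩ := exists_characteristic_finiteIndex_le K
  have hN : ResiduallyP l N := hKl.of_injective (Subgroup.inclusion_injective hNK)
  refine ⟨(mulAutQuotient N).ker ⊓ ((mulAutQuotient (charKer N (Multiplicative (ZMod l)))).comp
    (MulAut.characteristic N)).ker, inferInstance, ?_⟩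
  rintro p hp hpl α ⟨hα, hα'⟩ hαp
  have : Fact p.Prime := ⟨hp⟩
  exact hN.eq_one_of_restrict_mem_ker hpl hαp hα hα'

end ResiduallyP

theorem exists_prime_pow_eq_one_of_isOfFinOrder {G : Type*} [Group G] {g : G}
    (hg : IsOfFinOrder g) (hg1 : g ≠ 1) :
    ∃ p n : ℕ, p.Prime ∧ g ^ n ≠ 1 ∧ (g ^ n) ^ p = 1 := by
  obtain ⟨p, hp, hpg⟩ := Nat.exists_prime_and_dvd (mt orderOf_eq_one_iff.mp hg1)
  have hord := orderOf_pow_orderOf_div hg.orderOf_pos.ne' hpg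
  refine ⟨p, orderOf g / p, hp, fun h => ?_, ?_⟩
  · rw [h, orderOf_one] at hord
    exact hp.one_lt.ne hord
  · rw [← pow_mul, Nat.div_mul_cancel hpg, pow_orderOf_eq_one]

theorem virtuallyTorsionFree_mulAut {G : Type*} [Group G] [Group.FG G] {l₁ l₂ : ℕ} [Fact l₁.Prime]
    [Fact l₂.Prime] (hne : l₁ ≠ l₂) (h₁ : VirtuallyResiduallyP l₁ G)
    (h₂ : VirtuallyResiduallyP l₂ G) : VirtuallyTorsionFree (MulAut G) := by
  obtain ⟨D₁, _, hD₁⟩ := h₁.exists_finiteIndex_mulAut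
  obtain ⟨D₂, _, hD₂⟩ := h₂.exists_finiteIndex_mulAut
  refine ⟨D₁ ⊓ D₂, inferInstance, fun α hα hfin => ?_⟩
  by_contra hα1
  obtain ⟨p, n, hp, hn, hnp⟩ := exists_prime_pow_eq_one_of_isOfFinOrder hfin hα1
  rcases eq_or_ne p l₁ with rfl | hpl
  · exact hn (hD₂ p hp hne _ (pow_mem hα.2 n) hnp)
  · exact hn (hD₁ p hp hpl _ (pow_mem hα.1 n) hnp)

theorem exists_maximal_finite_subgroup {G : Type*} [Group G] {E : Set G} (hE : E.Finite)
    (hEconj : ∀ F : Subgroup G, Finite F → ∃ g : G, ∀ f ∈ F, g * f * g⁻¹ ∈ E) :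
    ∃ H : Subgroup G, Maximal (fun F : Subgroup G => Finite F) H := by
  have hcard (F : Subgroup G) (hF : Finite F) : Nat.card F ≤ E.ncard := by
    obtain ⟨g, hg⟩ := hEconj F hF
    exact Set.ncard_le_ncard_of_injOn (fun f => g * f * g⁻¹) hg
      (fun a _ b _ h => mul_left_cancel (mul_right_cancel h)) hE
  let S : Set ℕ := {n | ∃ F : Subgroup G, Finite F ∧ Nat.card F = n}
  have hS : S.Nonempty := ⟨_, ⊥, inferInstance, rfl⟩
  have hS_bdd : BddAbove S := ⟨E.ncard, fun _ ⟨F, hF, hn⟩ => hn ▸ hcard F hF⟩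
  obtain ⟨H, hH, hH_card⟩ := Nat.sSup_mem hS hS_bdd
  refine ⟨H, hH, fun F hF hle => (Subgroup.eq_of_le_of_card_ge hle ?_).ge⟩
  exact hH_card ▸ le_csSup hS_bdd ⟨F, hF, rfl⟩

section AutSplitting

variable {G : Type*} [Group G] {H : Subgroup G}

theorem outProj_conj (g : G) : outProj G (MulAut.conj g) = 1 :=
  (QuotientGroup.eq_one_iff _).mpr ⟨g, rfl⟩

theorem finite_ker_outProj_autFix [Finite (Subgroup.centralizer (H : Set G))] :
    Finite ((outProj G).comp (autFix G H).subtype).ker := by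
  have hconj (α : ((outProj G).comp (autFix G H).subtype).ker) :
      ∃ c : Subgroup.centralizer (H : Set G), MulAut.conj (c : G) = (α : MulAut G) := by
    obtain ⟨⟨α, hα⟩, hker⟩ := α
    obtain ⟨g, rfl⟩ := (QuotientGroup.eq_one_iff α).mp hker
    refine ⟨⟨g, fun h hh => ?_⟩, rfl⟩
    have hgh := hα h hh
    rw [MulAut.conj_apply, mul_inv_eq_iff_eq_mul] at hgh
    exact hgh.symm
  choose c hc using hconj
  refine Finite.of_injective c fun α β hαβ => Subtype.ext (Subtype.ext ?_)
  rw [← hc α, ← hc β, hαβ]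

theorem finiteIndex_map_outProj_autFix [Finite H] {E : Set G} (hE : E.Finite)
    (hEconj : ∀ F : Subgroup G, Finite F → ∃ g : G, ∀ f ∈ F, g * f * g⁻¹ ∈ E) :
    ((autFix G H).map (outProj G)).FiniteIndex := by
  have hrep (x : Out G) : ∃ φ : MulAut G, outProj G φ = x ∧ ∀ h : H, φ h ∈ E := by
    obtain ⟨φ, rfl⟩ := QuotientGroup.mk'_surjective (Inn G) x
    obtain ⟨g, hg⟩ := hEconj (H.map φ.toMonoidHom) (Set.Finite.image φ (Set.toFinite (H : Set G)))
    refine ⟨MulAut.conj g * φ, ?_, fun h => hg _ ⟨h, h.2, rfl⟩⟩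
    rw [map_mul, outProj_conj, one_mul]
    rfl
  choose φ hφ hφE using hrep
  have := hE.to_subtype
  let restrict (x : Out G) (h : H) : E := ⟨φ x h, hφE x h⟩
  have hrestrict {x y : Out G} (hxy : restrict x = restrict y) :
      x⁻¹ * y ∈ (autFix G H).map (outProj G) := by
    refine ⟨(φ x)⁻¹ * φ y, fun h hh => ?_, by rw [map_mul, map_inv, hφ, hφ]⟩
    have hh' : φ x h = φ y h := congrArg Subtype.val (congrFun hxy ⟨h, hh⟩)
    rw [MulAut.mul_apply, ← hh', MulAut.inv_apply_self]
  have : Finite (Out G ⧸ (autFix G H).map (outProj G)) := by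
    refine Finite.of_injective (fun q => restrict q.out) fun q r hqr => ?_
    rw [← q.out_eq', ← r.out_eq']
    exact QuotientGroup.eq.mpr (hrestrict hqr)
  exact Subgroup.finiteIndex_of_finite_quotient

theorem isAutSplitting_of_finite_centralizer [Finite H]
    [Finite (Subgroup.centralizer (H : Set G))] {E : Set G} (hE : E.Finite)
    (hEconj : ∀ F : Subgroup G, Finite F → ∃ g : G, ∀ f ∈ F, g * f * g⁻¹ ∈ E) :
    IsAutSplitting G H :=
  ⟨finite_ker_outProj_autFix, finiteIndex_map_outProj_autFix hE hEconj⟩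

theorem IsAutSplitting.finiteIndex_range (hH : IsAutSplitting G H) :
    ((outProj G).comp (autFix G H).subtype).range.FiniteIndex := by
  rw [MonoidHom.range_comp, Subgroup.range_subtype]
  exact hH.2

theorem IsAutSplitting.residuallyFinite_out [Group.FG G] [Group.ResiduallyFinite G]
    (hH : IsAutSplitting G H) : Group.ResiduallyFinite (Out G) := by
  have := hH.1
  have := hH.finiteIndex_range
  have : Group.ResiduallyFinite (MulAut G) := residuallyFinite_mulAut
  exact residuallyFinite_of_finite_ker_of_finiteIndex_range
    ((outProj G).comp (autFix G H).subtype)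

theorem IsAutSplitting.virtuallyTorsionFree_out (hH : IsAutSplitting G H)
    (hG : VirtuallyTorsionFree (MulAut G)) : VirtuallyTorsionFree (Out G) := by
  have := hH.1
  have := hH.finiteIndex_range
  exact (hG.subgroup (autFix G H)).of_finite_ker_of_finiteIndex_range
    ((outProj G).comp (autFix G H).subtype)

end AutSplitting

section IntegralMatrices

open Matrix

theorem natCast_pow_succ_dvd_pow_sub_one {A : Type*} [Ring A] {l : ℕ} {a : A}
    (ha : (l : A) ∣ a - 1) (k : ℕ) : (l : A) ^ (k + 1) ∣ a ^ l ^ k - 1 := by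
  obtain ⟨y, hy⟩ := ha
  have hdvd : (l : Polynomial ℤ) ∣ (1 + (l : Polynomial ℤ) * Polynomial.X) - 1 :=
    ⟨Polynomial.X, by ring⟩
  have hpow := dvd_sub_pow_of_dvd_sub hdvd k
  have haeval := map_dvd (Polynomial.aeval y) hpow
  simpa only [map_sub, map_pow, map_add, map_mul, map_one, map_natCast, Polynomial.aeval_X, ← hy,
    add_sub_cancel, one_pow] using haeval

variable {n : Type} [Fintype n] [DecidableEq n]

theorem natCast_dvd_matrix_iff {m : ℕ} {X : Matrix n n ℤ} :
    (m : Matrix n n ℤ) ∣ X ↔ ∀ i j, (m : ℤ) ∣ X i j := by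
  have hmul (Y : Matrix n n ℤ) : (m : Matrix n n ℤ) * Y = (m : ℤ) • Y := by
    rw [← nsmul_eq_mul, natCast_zsmul]
  constructor
  · rintro ⟨Y, rfl⟩ i j
    exact ⟨Y i j, by rw [hmul, Matrix.smul_apply, smul_eq_mul]⟩
  · intro h
    choose Y hY using h
    refine ⟨Matrix.of Y, ?_⟩
    ext i j
    rw [hmul, Matrix.smul_apply, Matrix.of_apply, hY, smul_eq_mul]

/-- The reduction homomorphism `GL(n, ℤ) → GL(n, ℤ/m)`, whose kernel is the principal congruence
subgroup of level `m`. -/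
noncomputable def glReduction (n : Type) [Fintype n] [DecidableEq n] (m : ℕ) :
    GL n ℤ →* GL n (ZMod m) :=
  Matrix.GeneralLinearGroup.map (Int.castRingHom (ZMod m))

theorem mem_ker_glReduction {m : ℕ} {g : GL n ℤ} :
    g ∈ (glReduction n m).ker ↔ (m : Matrix n n ℤ) ∣ (g : Matrix n n ℤ) - 1 := by
  have hmap : g ∈ (glReduction n m).ker ↔
      (Int.castRingHom (ZMod m)).mapMatrix ((g : Matrix n n ℤ) - 1) = 0 := by
    rw [map_sub, map_one, sub_eq_zero]
    exact Units.ext_iff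
  rw [hmap, natCast_dvd_matrix_iff, ← Matrix.ext_iff]
  exact forall₂_congr fun i j => ZMod.intCast_zmod_eq_zero_iff_dvd _ m

theorem pow_mem_ker_glReduction {l : ℕ} {g : GL n ℤ} (hg : g ∈ (glReduction n l).ker) (k : ℕ) :
    g ^ l ^ k ∈ (glReduction n (l ^ (k + 1))).ker := by
  rw [mem_ker_glReduction] at hg ⊢
  rw [Nat.cast_pow, Units.val_pow_eq_pow_val]
  exact natCast_pow_succ_dvd_pow_sub_one hg k

theorem exists_notMem_ker_glReduction_pow {l : ℕ} (hl : l ≠ 1) {g : GL n ℤ} (hg : g ≠ 1) :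
    ∃ k, g ∉ (glReduction n (l ^ (k + 1))).ker := by
  obtain ⟨i, j, hij⟩ : ∃ i j, ((g : Matrix n n ℤ) - 1) i j ≠ 0 := by
    by_contra! h
    exact hg (Units.ext (sub_eq_zero.mp (Matrix.ext h)))
  obtain ⟨k, hk⟩ := Int.finiteMultiplicity_iff.mpr ⟨(by simpa using hl : (l : ℤ).natAbs ≠ 1), hij⟩
  refine ⟨k, fun h => hk ?_⟩
  rw [← Nat.cast_pow]
  exact natCast_dvd_matrix_iff.mp (mem_ker_glReduction.mp h) i j

theorem residuallyP_ker_glReduction {l : ℕ} [Fact l.Prime] :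
    ResiduallyP l (glReduction n l).ker := by
  intro g hg
  obtain ⟨k, hk⟩ := exists_notMem_ker_glReduction_pow (Fact.out : l.Prime).ne_one
    (fun h => hg (Subtype.ext h) : (g : GL n ℤ) ≠ 1)
  let θ := (glReduction n (l ^ (k + 1))).comp (glReduction n l).ker.subtype
  refine ⟨θ.range, inferInstance, inferInstance, θ.rangeRestrict, ?_,
    fun h => hk (congrArg Subtype.val h)⟩
  rintro ⟨_, x, rfl⟩
  exact ⟨k, Subtype.ext ((map_pow θ x _).symm.trans (pow_mem_ker_glReduction x.2 k))⟩

theorem virtuallyResiduallyP_gl_int {l : ℕ} [Fact l.Prime] : VirtuallyResiduallyP l (GL n ℤ) :=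
  ⟨(glReduction n l).ker, inferInstance, residuallyP_ker_glReduction⟩

end IntegralMatrices

section DihedralReflections

open Real Polynomial

theorem chebyshevS_eval_two_mul_cos {θ : ℝ} (hθ : sin θ ≠ 0) (n : ℤ) :
    (Chebyshev.S ℝ n).eval (2 * cos θ) = sin ((n + 1) * θ) / sin θ := by
  rw [eq_div_iff hθ, Chebyshev.S_two_mul_real_cos]

theorem chebyshevS_eval_eq_zero {θ : ℝ} (hθ : sin θ ≠ 0) {n : ℤ} (hn : (n + 1) * θ = π) :
    (Chebyshev.S ℝ n).eval (2 * cos θ) = 0 := by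
  rw [chebyshevS_eval_two_mul_cos hθ, hn, sin_pi, zero_div]

theorem chebyshevS_eval_add_eval_sub_one_eq_zero {θ : ℝ} (hθ : sin θ ≠ 0) {n : ℤ}
    (hn : (2 * n + 1) * θ = 2 * π) :
    (Chebyshev.S ℝ n).eval (2 * cos θ) + (Chebyshev.S ℝ (n - 1)).eval (2 * cos θ) = 0 := by
  have hleft : ((n : ℝ) + 1) * θ = 2 * π - n * θ := by rw [← hn]; ring
  have hright : (((n - 1 : ℤ) : ℝ) + 1) * θ = n * θ := by push_cast; ring
  rw [chebyshevS_eval_two_mul_cos hθ, chebyshevS_eval_two_mul_cos hθ, hleft, hright,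
    sin_two_pi_sub, ← add_div, neg_add_cancel, zero_div]

theorem reflection_mul_reflection_pow_eq_one {V : Type*} [AddCommGroup V] [Module ℝ V] {x y : V}
    {f g : Module.Dual ℝ V} (hf : f x = 2) (hg : g y = 2) {m : ℕ} (hm : 3 ≤ m)
    (hfg : f y * g x = (2 * cos (π / m)) ^ 2) :
    (Module.reflection hf * Module.reflection hg) ^ m = 1 := by
  have hm' : (3 : ℝ) ≤ m := by exact_mod_cast hm
  have hmθ : (m : ℝ) * (2 * (π / m)) = 2 * π := by field_simp
  have hsin : sin (2 * (π / m)) ≠ 0 :=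
    (sin_pos_of_pos_of_lt_pi (by positivity) (by nlinarith [pi_pos])).ne'
  have ht : 2 * cos (2 * (π / m)) = f y * g x - 2 := by rw [hfg, cos_two_mul]; ring
  ext1 z
  rw [Module.reflection_mul_reflection_pow_apply hf hg m z _ ht, LinearEquiv.coe_one, id_eq]
  rcases Nat.even_or_odd' m with ⟨k, hk | hk⟩
  · have hzero := chebyshevS_eval_eq_zero hsin (n := k - 1) <| by
      push_cast
      rw [hk] at hmθ ⊢
      push_cast at hmθ ⊢
      linarith
    rw [show ((m : ℤ) - 2) / 2 = k - 1 by lia, show ((m : ℤ) - 1) / 2 = k - 1 by lia, hzero]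
    simp only [zero_mul, zero_smul, add_zero]
  · have hzero := chebyshevS_eval_add_eval_sub_one_eq_zero hsin (n := k) <| by
      rw [← hmθ, hk]
      push_cast
      ring
    rw [show ((m : ℤ) - 1) / 2 = k by lia, show ((m : ℤ) - 3) / 2 = k - 1 by lia,
      show (m : ℤ) / 2 = k by lia, show ((m : ℤ) - 2) / 2 = k - 1 by lia, hzero]
    simp only [mul_zero, zero_smul, add_zero]

end DihedralReflections

section GeometricRepresentation

open Real

section Reflections

variable {B : Type*} (M : CoxeterMatrix B)

/-- The coefficients `2 cos (π / M i j)` of the geometric representation, up to sign. For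
`M i j = ∞`, encoded as `M i j = 0`, division by zero yields the correct value `2`. -/
noncomputable def coxeterCoeff (i j : B) : ℝ := 2 * cos (π / M i j)

theorem coxeterCoeff_comm (i j : B) : coxeterCoeff M i j = coxeterCoeff M j i := by
  rw [coxeterCoeff, coxeterCoeff, M.symmetric]

theorem coxeterCoeff_self (i : B) : coxeterCoeff M i i = -2 := by
  rw [coxeterCoeff, M.diagonal, Nat.cast_one, div_one, cos_pi, mul_neg_one]

/-- The simple coroots of the geometric representation: the rows of the generalized Cartan matrix
`(-2 cos (π / M i j))`. -/
noncomputable def simpleCoroot [Fintype B] (i : B) : Module.Dual ℝ (B → ℝ) :=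
  -∑ j, coxeterCoeff M i j • LinearMap.proj j

theorem simpleCoroot_apply [Fintype B] (i : B) (v : B → ℝ) :
    simpleCoroot M i v = -∑ j, coxeterCoeff M i j * v j := by
  simp only [simpleCoroot, LinearMap.neg_apply, LinearMap.sum_apply, LinearMap.smul_apply,
    LinearMap.proj_apply, smul_eq_mul]

variable [DecidableEq B]

/-- The simple roots of the geometric representation: the standard basis of `B → ℝ`. -/
def simpleRoot (i : B) : B → ℝ := Pi.single i 1

theorem simpleRoot_nonneg (i : B) : 0 ≤ simpleRoot i := Pi.single_nonneg.mpr zero_le_one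

theorem simpleRoot_ne_zero (i : B) : simpleRoot i ≠ 0 := Pi.single_ne_zero_iff.mpr one_ne_zero

theorem simpleRoot_apply_self (i : B) : (simpleRoot i : B → ℝ) i = 1 := Pi.single_eq_same i 1

theorem simpleRoot_apply_of_ne {i j : B} (hij : j ≠ i) : simpleRoot i j = 0 :=
  Pi.single_eq_of_ne hij 1

variable [Fintype B]

theorem simpleCoroot_simpleRoot (i j : B) :
    simpleCoroot M i (simpleRoot j) = -coxeterCoeff M i j := by
  simp only [simpleCoroot_apply, simpleRoot, Pi.single_apply, mul_ite, mul_one, mul_zero,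
    Finset.sum_ite_eq', Finset.mem_univ, if_true]

theorem simpleCoroot_simpleRoot_self (i : B) : simpleCoroot M i (simpleRoot i) = 2 := by
  rw [simpleCoroot_simpleRoot, coxeterCoeff_self, neg_neg]

/-- The simple reflections of the geometric representation. -/
noncomputable def simpleReflection (i : B) : (B → ℝ) ≃ₗ[ℝ] (B → ℝ) :=
  Module.reflection (simpleCoroot_simpleRoot_self M i)

theorem simpleReflection_apply (i : B) (v : B → ℝ) :
    simpleReflection M i v = v - simpleCoroot M i v • simpleRoot i :=
  Module.reflection_apply v (simpleCoroot_simpleRoot_self M i)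

theorem simpleReflection_simpleRoot (i j : B) :
    simpleReflection M i (simpleRoot j) = simpleRoot j + coxeterCoeff M i j • simpleRoot i := by
  rw [simpleReflection_apply, simpleCoroot_simpleRoot, neg_smul, sub_neg_eq_add]

theorem simpleReflection_simpleRoot_self (i : B) :
    simpleReflection M i (simpleRoot i) = -simpleRoot i := by
  rw [simpleReflection_simpleRoot, coxeterCoeff_self]
  module

theorem simpleReflection_mul_self (i : B) : simpleReflection M i * simpleReflection M i = 1 :=
  LinearEquiv.ext (Module.involutive_reflection (simpleCoroot_simpleRoot_self M i))

theorem simpleReflection_mul_pow_two_eq_one {i j : B} (hij : M i j = 2) :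
    (simpleReflection M i * simpleReflection M j) ^ 2 = 1 := by
  have hcoeff : coxeterCoeff M i j = 0 := by
    rw [coxeterCoeff, hij, Nat.cast_ofNat, cos_pi_div_two, mul_zero]
  have hcomm : Commute (simpleReflection M i) (simpleReflection M j) := by
    refine LinearEquiv.ext fun v => ?_
    simp only [LinearEquiv.mul_apply, simpleReflection_apply, map_sub, map_smul,
      simpleCoroot_simpleRoot, coxeterCoeff_comm M j i, hcoeff]
    module
  rw [hcomm.mul_pow, pow_two, pow_two, simpleReflection_mul_self, simpleReflection_mul_self,
    one_mul]

theorem isLiftable_simpleReflection : M.IsLiftable (simpleReflection M) := by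
  intro i j
  rcases Nat.lt_or_ge (M i j) 3 with hlt | hge
  · obtain h | h | h : M i j = 0 ∨ M i j = 1 ∨ M i j = 2 := by lia
    · rw [h, pow_zero]
    · obtain rfl : i = j := not_imp_not.mp (M.off_diagonal i j) h
      rw [h, pow_one, simpleReflection_mul_self]
    · rw [h, simpleReflection_mul_pow_two_eq_one M h]
  · refine reflection_mul_reflection_pow_eq_one _ _ hge ?_
    rw [simpleCoroot_simpleRoot, simpleCoroot_simpleRoot, coxeterCoeff_comm M j i, coxeterCoeff,
      neg_mul_neg, pow_two]

end Reflections

section SineRatio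

/-- The sequence `sin (kπ/m) / sin (π/m)`, the coefficients of the roots of a dihedral group of
order `2m`. For `m = 0`, encoding the infinite dihedral group, it is the limiting sequence `k`. -/
noncomputable def sineRatio (m k : ℕ) : ℝ :=
  if m = 0 then k else sin (k * (π / m)) / sin (π / m)

theorem sin_pi_div_natCast_pos {m : ℕ} (hm : 2 ≤ m) : 0 < sin (π / m) :=
  sin_pos_of_pos_of_lt_pi (by positivity) (div_lt_self pi_pos (by exact_mod_cast hm))

theorem sineRatio_zero (m : ℕ) : sineRatio m 0 = 0 := by
  simp only [sineRatio, Nat.cast_zero, zero_mul, sin_zero, zero_div, ite_self]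

theorem sineRatio_one {m : ℕ} (hm : m ≠ 1) : sineRatio m 1 = 1 := by
  rw [sineRatio, Nat.cast_one, one_mul]
  split_ifs with h
  · rfl
  · exact div_self (sin_pi_div_natCast_pos (by lia)).ne'

theorem sineRatio_add_two (m k : ℕ) :
    sineRatio m (k + 2) = 2 * cos (π / m) * sineRatio m (k + 1) - sineRatio m k := by
  unfold sineRatio
  split_ifs with h
  · rw [h, Nat.cast_zero, div_zero, cos_zero]
    push_cast
    ring
  · rw [show ((k + 2 : ℕ) : ℝ) * (π / m) = ((k + 1 : ℕ) : ℝ) * (π / m) + π / m by push_cast; ring,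
      show (k : ℝ) * (π / m) = ((k + 1 : ℕ) : ℝ) * (π / m) - π / m by push_cast; ring, sin_add,
      sin_sub]
    ring

theorem sineRatio_nonneg {m : ℕ} (hm : m ≠ 1) {k : ℕ} (hk : m = 0 ∨ k ≤ m) :
    0 ≤ sineRatio m k := by
  unfold sineRatio
  split_ifs with h
  · positivity
  · have hkm : (k : ℝ) ≤ m := by exact_mod_cast hk.resolve_left h
    refine div_nonneg (sin_nonneg_of_nonneg_of_le_pi (by positivity) ?_)
      (sin_pi_div_natCast_pos (by lia)).le
    calc (k : ℝ) * (π / m) ≤ m * (π / m) := by gcongr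
      _ = π := by field_simp

end SineRatio

section AlternatingWords

open CoxeterSystem

variable {B : Type*} {M : CoxeterMatrix B} {W : Type*} [Group W] {cs : CoxeterSystem M W}

theorem not_isRightDescent_of_length_mul_wordProd_cons {v : W} {i : B} {ω : List B}
    (h : cs.length (v * cs.wordProd (i :: ω)) = cs.length v + (ω.length + 1)) :
    ¬ cs.IsRightDescent v i := fun hi => by
  rw [cs.wordProd_cons, ← mul_assoc] at h
  have hle := cs.length_mul_le (v * cs.simple i) (cs.wordProd ω)
  have hω := cs.length_wordProd_le ω
  have hi := (cs.isRightDescent_iff).mp hi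
  lia

/-- Strip off an alternating suffix of maximal length. -/
theorem exists_eq_mul_alternatingWord {w : W} {t : B} (ht : cs.IsRightDescent w t) (s : B) :
    ∃ (v : W) (k : ℕ), w = v * cs.wordProd (alternatingWord s t (k + 1)) ∧
      cs.length w = cs.length v + (k + 1) ∧
      ¬ cs.IsRightDescent v s ∧ ¬ cs.IsRightDescent v t := by
  classical
  let P (k : ℕ) : Prop :=
    ∃ v, w = v * cs.wordProd (alternatingWord s t k) ∧ cs.length w = cs.length v + k
  have hP_one : P 1 := by
    refine ⟨w * cs.simple t, ?_, ((cs.isRightDescent_iff).mp ht).symm⟩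
    rw [alternatingWord_succ', cs.wordProd_cons, if_pos Even.zero, ← mul_assoc,
      cs.simple_mul_simple_cancel_right, alternatingWord, cs.wordProd_nil, mul_one]
  have hP_le {k : ℕ} (hk : P k) : k ≤ cs.length w := by
    obtain ⟨v, -, hv⟩ := hk
    lia
  obtain ⟨k, hk⟩ := Nat.exists_eq_add_one.mpr (Nat.le_findGreatest (hP_le hP_one) hP_one)
  obtain ⟨v, hv, hlen⟩ : P (k + 1) := hk ▸ Nat.findGreatest_spec (hP_le hP_one) hP_one
  have hmax : ¬ P (k + 2) := fun h => by
    have := Nat.le_findGreatest (hP_le h) h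
    lia
  have hnext : ¬ cs.IsRightDescent v (if Even (k + 1) then t else s) := fun h => by
    refine hmax ⟨v * cs.simple (if Even (k + 1) then t else s), ?_, ?_⟩
    · rw [alternatingWord_succ', cs.wordProd_cons, ← mul_assoc, cs.simple_mul_simple_cancel_right,
        hv]
    · have := (cs.isRightDescent_iff).mp h
      lia
  have hprev : ¬ cs.IsRightDescent v (if Even k then t else s) := by
    refine not_isRightDescent_of_length_mul_wordProd_cons (ω := alternatingWord s t k) ?_
    rw [← alternatingWord_succ', ← hv, hlen, length_alternatingWord]
  refine ⟨v, k, hv, hlen, ?_⟩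
  by_cases hk : Even k
  · rw [if_neg (by rwa [Nat.even_add_one, not_not])] at hnext
    rw [if_pos hk] at hprev
    exact ⟨hnext, hprev⟩
  · rw [if_pos (by rwa [Nat.even_add_one])] at hnext
    rw [if_neg hk] at hprev
    exact ⟨hprev, hnext⟩

theorem lt_of_not_isRightDescent_mul_alternatingWord {v : W} {s t : B} {k : ℕ}
    (hlen : cs.length (v * cs.wordProd (alternatingWord s t k)) = cs.length v + k)
    (hs : ¬ cs.IsRightDescent (v * cs.wordProd (alternatingWord s t k)) s) (hM : M s t ≠ 0) :
    k < M s t := by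
  by_contra! hle
  have hred := cs.not_isReduced_alternatingWord t s (m := k + 1)
    (by rwa [M.symmetric]) (by rw [M.symmetric]; lia)
  have hword := cs.length_wordProd_le (alternatingWord t s (k + 1))
  rw [CoxeterSystem.IsReduced, length_alternatingWord] at hred
  rw [length_alternatingWord] at hword
  rw [cs.not_isRightDescent_iff, mul_assoc, ← cs.wordProd_concat, ← alternatingWord_succ] at hs
  have := cs.length_mul_le v (cs.wordProd (alternatingWord t s (k + 1)))
  lia

end AlternatingWords

variable {B : Type*} [DecidableEq B] [Fintype B] {M : CoxeterMatrix B} {W : Type*} [Group W]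
  (cs : CoxeterSystem M W)

/-- The geometric representation of a Coxeter group. -/
noncomputable def geometricRep : W →* ((B → ℝ) ≃ₗ[ℝ] (B → ℝ)) :=
  cs.lift ⟨simpleReflection M, isLiftable_simpleReflection M⟩

theorem geometricRep_simple (i : B) : geometricRep cs (cs.simple i) = simpleReflection M i :=
  cs.lift_apply_simple (isLiftable_simpleReflection M) i

theorem geometricRep_one_apply (x : B → ℝ) : geometricRep cs 1 x = x := by
  rw [map_one, LinearEquiv.coe_one, id_eq]

theorem geometricRep_mul_apply (v w : W) (x : B → ℝ) :
    geometricRep cs (v * w) x = geometricRep cs v (geometricRep cs w x) := by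
  rw [map_mul, LinearEquiv.mul_apply]

theorem geometricRep_inv_apply_self (w : W) (x : B → ℝ) :
    geometricRep cs w⁻¹ (geometricRep cs w x) = x := by
  rw [← geometricRep_mul_apply, inv_mul_cancel, geometricRep_one_apply]

theorem geometricRep_apply_inv_self (w : W) (x : B → ℝ) :
    geometricRep cs w (geometricRep cs w⁻¹ x) = x := by
  rw [← geometricRep_mul_apply, mul_inv_cancel, geometricRep_one_apply]

theorem geometricRep_alternatingWord {s t : B} (hst : s ≠ t) (k : ℕ) :
    geometricRep cs (cs.wordProd (CoxeterSystem.alternatingWord s t k)) (simpleRoot s) =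
      if Even k then
        sineRatio (M s t) (k + 1) • simpleRoot s + sineRatio (M s t) k • simpleRoot t
      else
        sineRatio (M s t) k • simpleRoot s + sineRatio (M s t) (k + 1) • simpleRoot t := by
  induction k with
  | zero =>
    rw [CoxeterSystem.alternatingWord, cs.wordProd_nil, geometricRep_one_apply, if_pos Even.zero,
      sineRatio_zero, sineRatio_one (M.off_diagonal s t hst), one_smul, zero_smul, add_zero]
  | succ k ih =>
    rw [CoxeterSystem.alternatingWord_succ', cs.wordProd_cons, geometricRep_mul_apply, ih,
      geometricRep_simple]
    by_cases hk : Even k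
    · have hk' : ¬ Even (k + 1) := by rwa [Nat.even_add_one, not_not]
      simp only [if_pos hk, if_neg hk', map_add, map_smul, simpleReflection_simpleRoot,
        coxeterCoeff_self, sineRatio_add_two]
      rw [coxeterCoeff_comm M t s, coxeterCoeff]
      module
    · have hk' : Even (k + 1) := by rwa [Nat.even_add_one]
      simp only [if_neg hk, if_pos hk', map_add, map_smul, simpleReflection_simpleRoot,
        coxeterCoeff_self, sineRatio_add_two]
      rw [coxeterCoeff]
      module

theorem geometricRep_smul_add_smul_nonneg {w : W} {a b : ℝ} (ha : 0 ≤ a) (hb : 0 ≤ b) {x y : B → ℝ}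
    (hx : 0 ≤ geometricRep cs w x) (hy : 0 ≤ geometricRep cs w y) :
    0 ≤ geometricRep cs w (a • x + b • y) := by
  rw [map_add, map_smul, map_smul]
  exact add_nonneg (smul_nonneg ha hx) (smul_nonneg hb hy)

theorem geometricRep_simpleRoot_nonneg {w : W} {s : B} (hs : ¬ cs.IsRightDescent w s) :
    0 ≤ geometricRep cs w (simpleRoot s) := by
  induction hn : cs.length w using Nat.strong_induction_on generalizing w s with
  | _ n ih =>
    by_cases hw : w = 1
    · rw [hw, geometricRep_one_apply]
      exact simpleRoot_nonneg s
    obtain ⟨t, ht⟩ := cs.exists_rightDescent_of_ne_one hw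
    have hst : s ≠ t := fun h => hs (h ▸ ht)
    obtain ⟨v, k, rfl, hlen, hvs, hvt⟩ := exists_eq_mul_alternatingWord ht s
    have hkM : M s t = 0 ∨ k + 1 < M s t :=
      or_iff_not_imp_left.mpr (lt_of_not_isRightDescent_mul_alternatingWord hlen hs)
    have hpos_s := ih _ (by lia) hvs rfl
    have hpos_t := ih _ (by lia) hvt rfl
    have hM := M.off_diagonal s t hst
    have hk := sineRatio_nonneg hM (k := k + 1) (by lia)
    have hk' := sineRatio_nonneg hM (k := k + 1 + 1) (by lia)
    rw [geometricRep_mul_apply, geometricRep_alternatingWord cs hst]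
    split_ifs
    · exact geometricRep_smul_add_smul_nonneg cs hk' hk hpos_s hpos_t
    · exact geometricRep_smul_add_smul_nonneg cs hk hk' hpos_s hpos_t

theorem geometricRep_simpleRoot_nonpos {w : W} {s : B} (hs : cs.IsRightDescent w s) :
    geometricRep cs w (simpleRoot s) ≤ 0 := by
  have hpos := geometricRep_simpleRoot_nonneg cs
    ((cs.isRightDescent_iff_not_isRightDescent_mul).mp hs)
  rwa [geometricRep_mul_apply, geometricRep_simple, simpleReflection_simpleRoot_self, map_neg,
    neg_nonneg] at hpos

theorem geometricRep_injective : Function.Injective (geometricRep cs) := by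
  refine (injective_iff_map_eq_one _).mpr fun w hw => ?_
  by_contra hne
  obtain ⟨t, ht⟩ := cs.exists_rightDescent_of_ne_one hne
  have hneg := geometricRep_simpleRoot_nonpos cs ht
  rw [hw, LinearEquiv.coe_one, id_eq] at hneg
  exact simpleRoot_ne_zero t (le_antisymm hneg (simpleRoot_nonneg t))

end GeometricRepresentation

section Roots

section Words

variable {B : Type*} {M : CoxeterMatrix B} {W : Type*} [Group W] (cs : CoxeterSystem M W)

/-- The standard parabolic subgroup generated by the simple reflections in `T`. -/
def standardParabolic (T : Set B) : Subgroup W := Subgroup.closure (cs.simple '' T)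

theorem finite_setOf_length_le [Finite B] (n : ℕ) : {w : W | cs.length w ≤ n}.Finite := by
  refine ((List.finite_length_le B n).image cs.wordProd).subset fun w hw => ?_
  obtain ⟨ω, hω, rfl⟩ := cs.exists_isReduced w
  exact ⟨ω, hω.eq.symm.trans_le hw, rfl⟩

end Words

section InvariantForm

variable {B : Type*} [Fintype B] (M : CoxeterMatrix B)

/-- The invariant symmetric bilinear form of the geometric representation, normalized so that
roots have square length `2`. -/
noncomputable def coxeterForm : LinearMap.BilinForm ℝ (B → ℝ) :=
  ∑ i, (LinearMap.proj i).smulRight (simpleCoroot M i)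

theorem coxeterForm_apply (u v : B → ℝ) :
    coxeterForm M u v = ∑ i, u i * simpleCoroot M i v := by
  simp only [coxeterForm, LinearMap.sum_apply, LinearMap.smulRight_apply, LinearMap.proj_apply,
    LinearMap.smul_apply, smul_eq_mul]

theorem coxeterForm_comm (u v : B → ℝ) : coxeterForm M u v = coxeterForm M v u := by
  simp only [coxeterForm_apply, simpleCoroot_apply, mul_neg, Finset.mul_sum,
    Finset.sum_neg_distrib]
  rw [Finset.sum_comm]
  congr! 3 with i _ j _
  rw [coxeterCoeff_comm M i j]
  ring

variable [DecidableEq B]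

theorem coxeterForm_simpleRoot (i : B) (v : B → ℝ) :
    coxeterForm M (simpleRoot i) v = simpleCoroot M i v := by
  simp only [coxeterForm_apply, simpleRoot, Pi.single_apply, ite_mul, one_mul, zero_mul,
    Finset.sum_ite_eq', Finset.mem_univ, if_true]

theorem coxeterForm_simpleReflection (i : B) (u v : B → ℝ) :
    coxeterForm M (simpleReflection M i u) (simpleReflection M i v) = coxeterForm M u v := by
  simp only [simpleReflection_apply, map_sub, map_smul, LinearMap.sub_apply, LinearMap.smul_apply,
    coxeterForm_simpleRoot, coxeterForm_comm M u (simpleRoot i), simpleCoroot_simpleRoot_self,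
    smul_eq_mul]
  ring

end InvariantForm

section LinearForms

/-- The linear form summing the coefficients with respect to the simple roots. -/
def rootHeight (B : Type*) [Fintype B] : Module.Dual ℝ (B → ℝ) := ∑ i, LinearMap.proj i

theorem rootHeight_pos {B : Type*} [Fintype B] {v : B → ℝ} (hv : 0 ≤ v) (hne : v ≠ 0) :
    0 < rootHeight B v := by
  rw [rootHeight, LinearMap.sum_apply]
  exact Fintype.sum_pos (lt_of_le_of_ne hv hne.symm)

/-- A linear form in the closed fundamental chamber. -/
def IsDominant {B : Type*} [DecidableEq B] (x : Module.Dual ℝ (B → ℝ)) : Prop :=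
  ∀ i, 0 ≤ x (simpleRoot i)

theorem IsDominant.apply_nonneg {B : Type*} [Finite B] [DecidableEq B]
    {x : Module.Dual ℝ (B → ℝ)} (hx : IsDominant x) {v : B → ℝ} (hv : 0 ≤ v) : 0 ≤ x v := by
  have := Fintype.ofFinite B
  rw [← (Pi.basisFun ℝ B).sum_repr v, map_sum]
  refine Finset.sum_nonneg fun i _ => ?_
  rw [map_smul, Pi.basisFun_repr, Pi.basisFun_apply]
  exact mul_nonneg (hv i) (hx i)

end LinearForms

variable {B : Type*} [DecidableEq B] [Fintype B] {M : CoxeterMatrix B} {W : Type*} [Group W]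
  (cs : CoxeterSystem M W)

theorem coxeterForm_geometricRep (w : W) (u v : B → ℝ) :
    coxeterForm M (geometricRep cs w u) (geometricRep cs w v) = coxeterForm M u v := by
  induction w using cs.simple_induction_left with
  | one => rw [geometricRep_one_apply, geometricRep_one_apply]
  | mul_simple_left w i ih =>
    rw [geometricRep_mul_apply, geometricRep_mul_apply, geometricRep_simple,
      coxeterForm_simpleReflection, ih]

/-- The roots of a Coxeter system: the orbits of the simple roots. -/
def rootSet : Set (B → ℝ) := {β | ∃ (w : W) (i : B), geometricRep cs w (simpleRoot i) = β}

theorem simpleRoot_mem_rootSet (i : B) : simpleRoot i ∈ rootSet cs :=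
  ⟨1, i, geometricRep_one_apply cs _⟩

variable {cs}

theorem geometricRep_mem_rootSet {β : B → ℝ} (hβ : β ∈ rootSet cs) (w : W) :
    geometricRep cs w β ∈ rootSet cs := by
  obtain ⟨v, i, rfl⟩ := hβ
  exact ⟨w * v, i, geometricRep_mul_apply cs w v _⟩

theorem simpleReflection_mem_rootSet {β : B → ℝ} (hβ : β ∈ rootSet cs) (i : B) :
    simpleReflection M i β ∈ rootSet cs :=
  geometricRep_simple cs i ▸ geometricRep_mem_rootSet hβ (cs.simple i)

theorem neg_mem_rootSet {β : B → ℝ} (hβ : β ∈ rootSet cs) : -β ∈ rootSet cs := by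
  obtain ⟨w, i, rfl⟩ := hβ
  rw [← map_neg, ← simpleReflection_simpleRoot_self M]
  exact geometricRep_mem_rootSet (simpleReflection_mem_rootSet (simpleRoot_mem_rootSet cs i) i) w

theorem ne_zero_of_mem_rootSet {β : B → ℝ} (hβ : β ∈ rootSet cs) : β ≠ 0 := by
  obtain ⟨w, i, rfl⟩ := hβ
  exact (geometricRep cs w).map_ne_zero_iff.mpr (simpleRoot_ne_zero i)

theorem coxeterForm_self_of_mem_rootSet {β : B → ℝ} (hβ : β ∈ rootSet cs) :
    coxeterForm M β β = 2 := by
  obtain ⟨w, i, rfl⟩ := hβ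
  rw [coxeterForm_geometricRep, coxeterForm_simpleRoot, simpleCoroot_simpleRoot_self]

theorem nonneg_or_nonpos_of_mem_rootSet {β : B → ℝ} (hβ : β ∈ rootSet cs) : 0 ≤ β ∨ β ≤ 0 := by
  obtain ⟨w, i, rfl⟩ := hβ
  by_cases hi : cs.IsRightDescent w i
  · exact Or.inr (geometricRep_simpleRoot_nonpos cs hi)
  · exact Or.inl (geometricRep_simpleRoot_nonneg cs hi)

theorem eq_simpleRoot_of_smul_mem_rootSet {c : ℝ} (hc : 0 ≤ c) {i : B}
    (h : c • simpleRoot i ∈ rootSet cs) : c • simpleRoot i = simpleRoot i := by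
  have hform := coxeterForm_self_of_mem_rootSet h
  simp only [map_smul, LinearMap.smul_apply, coxeterForm_simpleRoot, simpleCoroot_simpleRoot_self,
    smul_eq_mul] at hform
  obtain rfl : c = 1 := by nlinarith
  rw [one_smul]

variable (cs)

/-- The roots with nonnegative coordinates with respect to the simple roots. -/
def positiveRoots : Set (B → ℝ) := {β ∈ rootSet cs | 0 ≤ β}

theorem simpleRoot_mem_positiveRoots (i : B) : simpleRoot i ∈ positiveRoots cs :=
  ⟨simpleRoot_mem_rootSet cs i, simpleRoot_nonneg i⟩

theorem neg_simpleRoot_notMem_positiveRoots (i : B) : -simpleRoot i ∉ positiveRoots cs :=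
  fun h => simpleRoot_ne_zero i (le_antisymm (neg_nonneg.mp h.2) (simpleRoot_nonneg i))

variable {cs}

theorem simpleReflection_mem_positiveRoots {β : B → ℝ} (hβ : β ∈ positiveRoots cs) {i : B}
    (hne : β ≠ simpleRoot i) : simpleReflection M i β ∈ positiveRoots cs := by
  have hroot := simpleReflection_mem_rootSet hβ.1 i
  refine ⟨hroot, (nonneg_or_nonpos_of_mem_rootSet hroot).resolve_right fun hneg => hne ?_⟩
  have hcoord : β = β i • simpleRoot i := by
    ext j
    rcases eq_or_ne j i with rfl | hj
    · rw [Pi.smul_apply, simpleRoot_apply_self, smul_eq_mul, mul_one]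
    · have hj_le := hneg j
      rw [simpleReflection_apply, Pi.sub_apply, Pi.smul_apply, simpleRoot_apply_of_ne hj,
        smul_zero, sub_zero] at hj_le
      rw [Pi.smul_apply, simpleRoot_apply_of_ne hj, smul_zero]
      exact le_antisymm hj_le (hβ.2 j)
  have hcoord_nonneg : 0 ≤ β i := hβ.2 i
  rw [hcoord] at hβ ⊢
  exact eq_simpleRoot_of_smul_mem_rootSet hcoord_nonneg hβ.1

theorem positiveRoots_inter_eq_insert {N : Set (B → ℝ)} {i : B} (hi : simpleRoot i ∈ N)
    (hi' : -simpleRoot i ∉ N) :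
    positiveRoots cs ∩ N = insert (simpleRoot i)
      (simpleReflection M i '' (positiveRoots cs ∩ simpleReflection M i ⁻¹' N)) := by
  have hinvol (v : B → ℝ) : simpleReflection M i (simpleReflection M i v) = v :=
    DFunLike.congr_fun (simpleReflection_mul_self M i) v
  ext β
  constructor
  · rintro ⟨hβ, hβN⟩
    refine or_iff_not_imp_left.mpr fun hne => ?_
    refine ⟨simpleReflection M i β, ⟨simpleReflection_mem_positiveRoots hβ hne, ?_⟩, hinvol β⟩
    rwa [Set.mem_preimage, hinvol]
  · rintro (rfl | ⟨γ, ⟨hγ, hγN⟩, rfl⟩)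
    · exact ⟨simpleRoot_mem_positiveRoots cs i, hi⟩
    · refine ⟨simpleReflection_mem_positiveRoots hγ ?_, hγN⟩
      rintro rfl
      rw [Set.mem_preimage, simpleReflection_simpleRoot_self] at hγN
      exact hi' hγN

theorem encard_positiveRoots_inter {N : Set (B → ℝ)} {i : B} (hi : simpleRoot i ∈ N)
    (hi' : -simpleRoot i ∉ N) :
    (positiveRoots cs ∩ N).encard =
      (positiveRoots cs ∩ simpleReflection M i ⁻¹' N).encard + 1 := by
  rw [positiveRoots_inter_eq_insert hi hi', Set.encard_insert_of_notMem,
    (simpleReflection M i).injective.encard_image]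
  rintro ⟨γ, ⟨hγ, -⟩, hγi⟩
  obtain rfl : γ = -simpleRoot i := by
    apply (simpleReflection M i).injective
    rw [hγi, map_neg, simpleReflection_simpleRoot_self, neg_neg]
  exact neg_simpleRoot_notMem_positiveRoots cs i hγ

variable (cs)

/-- The inversions of `w`: the positive roots that `w` makes negative. -/
def inversionSet (w : W) : Set (B → ℝ) := positiveRoots cs ∩ {β | ¬ 0 ≤ geometricRep cs w β}

theorem encard_inversionSet (w : W) : (inversionSet cs w).encard = cs.length w := by
  induction hn : cs.length w generalizing w with
  | zero =>
    obtain rfl := cs.length_eq_zero_iff.mp hn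
    refine Set.encard_eq_zero.mpr (Set.eq_empty_of_forall_notMem fun β hβ => hβ.2 ?_)
    rw [geometricRep_one_apply]
    exact hβ.1.2
  | succ n ih =>
    have hne : w ≠ 1 := by
      rintro rfl
      rw [cs.length_one] at hn
      exact n.succ_ne_zero hn.symm
    obtain ⟨i, hi⟩ := cs.exists_rightDescent_of_ne_one hne
    have hneg := geometricRep_simpleRoot_nonpos cs hi
    have hn' : cs.length (w * cs.simple i) = n := by
      have := cs.isRightDescent_iff.mp hi
      lia
    have hroot := geometricRep_mem_rootSet (simpleRoot_mem_rootSet cs i) w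
    have hmem : simpleRoot i ∈ {β | ¬ 0 ≤ geometricRep cs w β} := fun h =>
      ne_zero_of_mem_rootSet hroot (le_antisymm hneg h)
    have hneg_notMem : -simpleRoot i ∉ {β | ¬ 0 ≤ geometricRep cs w β} := fun h =>
      h (by rw [map_neg]; exact neg_nonneg.mpr hneg)
    rw [inversionSet, encard_positiveRoots_inter hmem hneg_notMem, Nat.cast_add_one, ← ih _ hn']
    simp only [inversionSet, geometricRep_mul_apply, geometricRep_simple, Set.preimage_ofPred_eq]

theorem finite_inversionSet (w : W) : (inversionSet cs w).Finite :=
  Set.finite_of_encard_eq_coe (encard_inversionSet cs w)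

/-- A linear form in the interior of the Tits cone: it is positive on all but finitely many
positive roots. -/
def IsTitsInterior (x : Module.Dual ℝ (B → ℝ)) : Prop := (positiveRoots cs ∩ {β | x β ≤ 0}).Finite

variable {cs}

theorem IsTitsInterior.smul_add_smul {x y : Module.Dual ℝ (B → ℝ)} (hx : IsTitsInterior cs x)
    (hy : IsTitsInterior cs y) {a b : ℝ} (ha : 0 ≤ a) (hb : 0 < b) :
    IsTitsInterior cs (a • x + b • y) := by
  refine (hx.union hy).subset ?_
  rintro β ⟨hβ, hβ_le⟩
  by_contra! h
  have hxβ : 0 < x β := not_le.mp fun hle => h (Or.inl ⟨hβ, hle⟩)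
  have hyβ : 0 < y β := not_le.mp fun hle => h (Or.inr ⟨hβ, hle⟩)
  exact not_lt_of_ge hβ_le (add_pos_of_nonneg_of_pos (mul_nonneg ha hxβ.le) (mul_pos hb hyβ))

theorem IsTitsInterior.dualMap {x : Module.Dual ℝ (B → ℝ)} (hx : IsTitsInterior cs x) (w : W) :
    IsTitsInterior cs ((geometricRep cs w).dualMap x) := by
  refine ((finite_inversionSet cs w).union
    (hx.preimage (geometricRep cs w).injective.injOn)).subset ?_
  rintro β ⟨hβ, hβ_le⟩
  by_cases hw : 0 ≤ geometricRep cs w β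
  · exact Or.inr ⟨⟨geometricRep_mem_rootSet hβ.1 w, hw⟩, hβ_le⟩
  · exact Or.inl ⟨hβ, hw⟩

/-- An inversion `β` of `w` either satisfies `x β ≤ 0`, or `-w β` is a positive root on which `x` is
nonpositive. -/
theorem length_le_of_pos_imp_pos {x : Module.Dual ℝ (B → ℝ)} {w : W}
    (hw : ∀ β ∈ rootSet cs, 0 < x β → 0 < x (geometricRep cs w β)) :
    (cs.length w : ℕ∞) ≤ (positiveRoots cs ∩ {β | x β ≤ 0}).encard +
      (positiveRoots cs ∩ {β | x β ≤ 0}).encard := by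
  have hsub : inversionSet cs w ⊆ (positiveRoots cs ∩ {β | x β ≤ 0}) ∪
      (fun γ => -geometricRep cs w⁻¹ γ) '' (positiveRoots cs ∩ {β | x β ≤ 0}) := by
    rintro β ⟨hβ, hneg⟩
    refine or_iff_not_imp_left.mpr fun hpos => ?_
    have hxβ : 0 < x β := not_le.mp fun hle => hpos ⟨hβ, hle⟩
    have hroot := geometricRep_mem_rootSet hβ.1 w
    refine ⟨-geometricRep cs w β, ⟨⟨neg_mem_rootSet hroot, neg_nonneg.mpr <|
      (nonneg_or_nonpos_of_mem_rootSet hroot).resolve_left hneg⟩, ?_⟩, ?_⟩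
    · rw [Set.mem_ofPred_eq, map_neg]
      exact neg_nonpos.mpr (hw β hβ.1 hxβ).le
    · simp only [map_neg, neg_neg, geometricRep_inv_apply_self]
  rw [← encard_inversionSet]
  exact (Set.encard_le_encard hsub).trans <|
    (Set.encard_union_le _ _).trans (add_le_add_right (Set.encard_image_le _ _) _)

theorem IsTitsInterior.finite_setOf_pos_imp_pos {x : Module.Dual ℝ (B → ℝ)}
    (hx : IsTitsInterior cs x) :
    {w : W | ∀ β ∈ rootSet cs, 0 < x β → 0 < x (geometricRep cs w β)}.Finite := by
  refine (finite_setOf_length_le cs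
    ((positiveRoots cs ∩ {β | x β ≤ 0}).ncard + (positiveRoots cs ∩ {β | x β ≤ 0}).ncard)).subset
    fun w hw => ?_
  have hle := length_le_of_pos_imp_pos hw
  rw [← Set.Finite.cast_ncard_eq hx] at hle
  exact_mod_cast hle

variable (cs)

/-- The stabilizer of a linear form under the contragredient action. -/
def dualStabilizer (x : Module.Dual ℝ (B → ℝ)) : Subgroup W where
  carrier := {w | ∀ v, x (geometricRep cs w v) = x v}
  one_mem' v := by rw [geometricRep_one_apply]
  mul_mem' ha hb v := by rw [geometricRep_mul_apply, ha, hb]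
  inv_mem' {a} ha v := by rw [← ha, geometricRep_apply_inv_self]

variable {cs}

theorem conj_mem_dualStabilizer_dualMap {x : Module.Dual ℝ (B → ℝ)} {f : W}
    (hf : f ∈ dualStabilizer cs x) (w : W) :
    w⁻¹ * f * w ∈ dualStabilizer cs ((geometricRep cs w).dualMap x) := by
  intro v
  rw [LinearEquiv.dualMap_apply, LinearEquiv.dualMap_apply, geometricRep_mul_apply,
    geometricRep_mul_apply, geometricRep_apply_inv_self, hf]

theorem mem_dualStabilizer_dualMap_of_commute {x : Module.Dual ℝ (B → ℝ)} {c h : W}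
    (hch : Commute c h) (hh : h ∈ dualStabilizer cs x) :
    h ∈ dualStabilizer cs ((geometricRep cs c).dualMap x) := by
  simpa only [mul_assoc, ← hch.eq, inv_mul_cancel_left] using conj_mem_dualStabilizer_dualMap hh c

theorem conj_simple_mem_dualStabilizer_iff {x : Module.Dual ℝ (B → ℝ)} {w : W} {i : B} :
    w * cs.simple i * w⁻¹ ∈ dualStabilizer cs x ↔ x (geometricRep cs w (simpleRoot i)) = 0 := by
  have hrefl (v : B → ℝ) : x (geometricRep cs (w * cs.simple i * w⁻¹) v) = x v -
      simpleCoroot M i (geometricRep cs w⁻¹ v) * x (geometricRep cs w (simpleRoot i)) := by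
    rw [geometricRep_mul_apply, geometricRep_mul_apply, geometricRep_simple,
      simpleReflection_apply, map_sub, map_smul, geometricRep_apply_inv_self, map_sub, map_smul,
      smul_eq_mul]
  constructor
  · intro hmem
    have h := hmem (geometricRep cs w (simpleRoot i))
    rw [hrefl, geometricRep_inv_apply_self, simpleCoroot_simpleRoot_self] at h
    linarith
  · intro hzero v
    rw [hrefl, hzero, mul_zero, sub_zero]

theorem simple_mem_dualStabilizer_iff {x : Module.Dual ℝ (B → ℝ)} {i : B} :
    cs.simple i ∈ dualStabilizer cs x ↔ x (simpleRoot i) = 0 := by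
  simpa only [one_mul, inv_one, mul_one, geometricRep_one_apply] using
    conj_simple_mem_dualStabilizer_iff (cs := cs) (x := x) (w := 1)

theorem IsTitsInterior.finite_dualStabilizer {x : Module.Dual ℝ (B → ℝ)}
    (hx : IsTitsInterior cs x) : Finite (dualStabilizer cs x) :=
  (hx.finite_setOf_pos_imp_pos.subset fun _ (hw : _ ∈ dualStabilizer cs x) β _ hβ =>
    (hw β).symm ▸ hβ).to_subtype

variable (cs)

/-- Sum the `F`-translates of a form that is positive on all positive roots. -/
theorem exists_isTitsInterior_le_dualStabilizer (F : Subgroup W) [Finite F] :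
    ∃ x : Module.Dual ℝ (B → ℝ), IsTitsInterior cs x ∧ F ≤ dualStabilizer cs x := by
  have := Fintype.ofFinite F
  let x : Module.Dual ℝ (B → ℝ) := ∑ f : F, (geometricRep cs f).dualMap (rootHeight B)
  have hx (v : B → ℝ) : x v = ∑ f : F, rootHeight B (geometricRep cs f v) := by
    simp only [x, LinearMap.sum_apply, LinearEquiv.dualMap_apply]
  refine ⟨x, ?_, fun g hg v => ?_⟩
  · refine (Set.finite_iUnion fun f : F => finite_inversionSet cs (f : W)).subset ?_
    rintro β ⟨hβ, (hβ_le : x β ≤ 0)⟩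
    by_contra hnot_inv
    have hnonneg (f : F) : 0 ≤ geometricRep cs f β := by
      by_contra hf
      exact hnot_inv (Set.mem_iUnion.mpr ⟨f, hβ, hf⟩)
    refine not_lt_of_ge hβ_le ?_
    rw [hx]
    exact Finset.sum_pos (fun f _ => rootHeight_pos (hnonneg f)
      (ne_zero_of_mem_rootSet (geometricRep_mem_rootSet hβ.1 _))) Finset.univ_nonempty
  · rw [hx, hx]
    refine Fintype.sum_equiv (Equiv.mulRight ⟨g, hg⟩) _ _ fun f => ?_
    rw [← geometricRep_mul_apply]
    rfl

variable {cs}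

/-- If `x` is negative on `α_i`, then replacing `x` by its `s_i`-translate lowers the number of
positive roots on which `x` is negative. -/
theorem exists_isDominant_dualMap {x : Module.Dual ℝ (B → ℝ)}
    (hx : (positiveRoots cs ∩ {β | x β < 0}).Finite) :
    ∃ w : W, IsDominant ((geometricRep cs w).dualMap x) := by
  obtain ⟨n, hn⟩ := hx.exists_encard_eq_coe
  clear hx
  induction n generalizing x with
  | zero =>
    refine ⟨1, fun i => ?_⟩
    rw [LinearEquiv.dualMap_apply, geometricRep_one_apply]
    by_contra! hi
    exact (Set.encard_eq_zero.mp hn).subset ⟨simpleRoot_mem_positiveRoots cs i, hi⟩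
  | succ n ih =>
    by_cases hdom : IsDominant x
    · refine ⟨1, fun i => ?_⟩
      rw [LinearEquiv.dualMap_apply, geometricRep_one_apply]
      exact hdom i
    obtain ⟨i, hi⟩ := not_forall.mp hdom
    rw [not_le] at hi
    have hneg_notMem : -simpleRoot i ∉ {β | x β < 0} := fun h => by
      rw [Set.mem_ofPred_eq, map_neg, neg_lt_zero] at h
      exact lt_asymm hi h
    rw [encard_positiveRoots_inter hi hneg_notMem, Nat.cast_add_one] at hn
    obtain ⟨w, hw⟩ := ih (x := (simpleReflection M i).dualMap x)
      (ENat.add_left_injective_of_ne_top ENat.one_ne_top hn)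
    refine ⟨cs.simple i * w, fun j => ?_⟩
    rw [LinearEquiv.dualMap_apply, geometricRep_mul_apply, geometricRep_simple]
    exact hw j

variable (cs)

theorem dualStabilizer_eq_standardParabolic {x : Module.Dual ℝ (B → ℝ)} (hx : IsDominant x) :
    dualStabilizer cs x = standardParabolic cs {i | x (simpleRoot i) = 0} := by
  refine le_antisymm (fun g hg => ?_) ?_
  · induction hn : cs.length g generalizing g with
    | zero => exact cs.length_eq_zero_iff.mp hn ▸ one_mem _
    | succ n ih =>
      have hne : g ≠ 1 := by
        rintro rfl
        rw [cs.length_one] at hn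
        exact n.succ_ne_zero hn.symm
      obtain ⟨i, hi⟩ := cs.exists_rightDescent_of_ne_one hne
      have hzero : x (simpleRoot i) = 0 := by
        have hle := hx.apply_nonneg (neg_nonneg.mpr (geometricRep_simpleRoot_nonpos cs hi))
        rw [map_neg, hg, neg_nonneg] at hle
        exact le_antisymm hle (hx i)
      have hlen : cs.length (g * cs.simple i) = n := by
        have := cs.isRightDescent_iff.mp hi
        lia
      have hmem := ih _ (mul_mem hg (simple_mem_dualStabilizer_iff.mpr hzero)) hlen
      have hsimple : cs.simple i ∈ standardParabolic cs {i | x (simpleRoot i) = 0} :=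
        Subgroup.subset_closure ⟨i, hzero, rfl⟩
      exact cs.simple_mul_simple_cancel_right i (w := g) ▸ mul_mem hmem hsimple
  · rw [standardParabolic, Subgroup.closure_le]
    rintro _ ⟨i, hi, rfl⟩
    exact simple_mem_dualStabilizer_iff.mpr hi

variable {cs}

/-- Otherwise some `β` has `x β > 0 ≥ x (c β)`, so a point `p` on the segment from `x` to its
`c`-translate vanishes on `β`. Then the stabilizer of `p`, which is `H`, contains the reflection in
`β`, and this reflection does not fix `x`. -/
theorem pos_apply_of_mem_centralizer {H : Subgroup W}
    (hH : Maximal (fun F : Subgroup W => Finite F) H) {x : Module.Dual ℝ (B → ℝ)}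
    (hx : IsTitsInterior cs x) (hHx : H ≤ dualStabilizer cs x) {c : W}
    (hc : c ∈ Subgroup.centralizer (H : Set W)) {β : B → ℝ} (hβ : β ∈ rootSet cs)
    (hpos : 0 < x β) : 0 < x (geometricRep cs c β) := by
  by_contra! hle
  let y := (geometricRep cs c).dualMap x
  let p := -y β • x + x β • y
  have hp : IsTitsInterior cs p := hx.smul_add_smul (hx.dualMap c) (neg_nonneg.mpr hle) hpos
  have hHp : H ≤ dualStabilizer cs p := fun h hh v => by
    have hxh := hHx hh v
    have hyh := mem_dualStabilizer_dualMap_of_commute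
      (Subgroup.mem_centralizer_iff.mp hc h hh).symm (hHx hh) v
    simp only [p, y, LinearMap.add_apply, LinearMap.smul_apply, hxh, hyh]
  have hp_zero : p β = 0 := by
    simp only [p, LinearMap.add_apply, LinearMap.smul_apply, smul_eq_mul]
    ring
  have hstab : dualStabilizer cs p ≤ H := hH.le_of_ge hp.finite_dualStabilizer hHp
  obtain ⟨w, i, rfl⟩ := hβ
  exact hpos.ne' <| conj_simple_mem_dualStabilizer_iff.mp <| hHx <| hstab <|
    conj_simple_mem_dualStabilizer_iff.mpr hp_zero

end Roots

section FiniteSubgroups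

variable {B : Type*} {M : CoxeterMatrix B} {W : Type*} [Group W]

/-- The union of the finite standard parabolic subgroups. Every finite subgroup has a
conjugate inside it. -/
def finiteParabolicUnion (cs : CoxeterSystem M W) : Set W :=
  ⋃ T ∈ {T : Set B | Finite (standardParabolic cs T)}, standardParabolic cs T

variable [Finite B]

theorem exists_conj_mem_standardParabolic (cs : CoxeterSystem M W) (F : Subgroup W) [Finite F] :
    ∃ (w : W) (T : Set B), Finite (standardParabolic cs T) ∧
      ∀ f ∈ F, w * f * w⁻¹ ∈ standardParabolic cs T := by
  classical
  have := Fintype.ofFinite B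
  obtain ⟨x, hx, hF⟩ := exists_isTitsInterior_le_dualStabilizer cs F
  obtain ⟨w, hw⟩ := exists_isDominant_dualMap
    (hx.subset (Set.inter_subset_inter_right _ fun β (hβ : x β < 0) => hβ.le))
  have hstab := dualStabilizer_eq_standardParabolic cs hw
  refine ⟨w⁻¹, _, hstab ▸ (hx.dualMap w).finite_dualStabilizer, fun f hf => ?_⟩
  rw [← hstab, inv_inv]
  exact conj_mem_dualStabilizer_dualMap (hF hf) w

theorem finite_finiteParabolicUnion (cs : CoxeterSystem M W) : (finiteParabolicUnion cs).Finite :=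
  (Set.toFinite _).biUnion fun _ hT => @Set.toFinite _ _ hT

theorem exists_conj_mem_finiteParabolicUnion (cs : CoxeterSystem M W) (F : Subgroup W)
    (hF : Finite F) :
    ∃ w : W, ∀ f ∈ F, w * f * w⁻¹ ∈ finiteParabolicUnion cs := by
  obtain ⟨w, T, hT, hw⟩ := exists_conj_mem_standardParabolic cs F
  exact ⟨w, fun f hf => Set.mem_biUnion hT (hw f hf)⟩

theorem finite_centralizer_of_maximal_finite (cs : CoxeterSystem M W) {H : Subgroup W}
    (hH : Maximal (fun F : Subgroup W => Finite F) H) :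
    Finite (Subgroup.centralizer (H : Set W)) := by
  classical
  have := Fintype.ofFinite B
  have : Finite H := hH.prop
  obtain ⟨x, hx, hHx⟩ := exists_isTitsInterior_le_dualStabilizer cs H
  exact (hx.finite_setOf_pos_imp_pos.subset fun _ hc _ hβ hpos =>
    pos_apply_of_mem_centralizer hH hx hHx hc hβ hpos).to_subtype

theorem exists_isAutSplitting (cs : CoxeterSystem M W) : ∃ H : Subgroup W, IsAutSplitting W H := by
  have hfin := finite_finiteParabolicUnion cs
  have hconj := exists_conj_mem_finiteParabolicUnion cs
  obtain ⟨H, hH⟩ := exists_maximal_finite_subgroup hfin hconj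
  have : Finite H := hH.prop
  have := finite_centralizer_of_maximal_finite cs hH
  exact ⟨H, isAutSplitting_of_finite_centralizer hfin hconj⟩

end FiniteSubgroups

section Integrality

open Real

section Lattice

variable {B : Type*} (M : CoxeterMatrix B)

theorem isIntegral_coxeterCoeff (i j : B) : IsIntegral ℤ (coxeterCoeff M i j) := by
  convert Real.isIntegral_two_mul_cos_rat_mul_pi (1 / (M i j : ℚ)) using 1
  rw [coxeterCoeff, Rat.cast_div, Rat.cast_one, Rat.cast_natCast, one_div_mul_eq_div]

/-- The ring generated by the coefficients of the geometric representation. -/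
def coeffRing : Subalgebra ℤ ℝ :=
  Algebra.adjoin ℤ (Set.range fun ij : B × B => coxeterCoeff M ij.1 ij.2)

theorem coxeterCoeff_mem_coeffRing (i j : B) : coxeterCoeff M i j ∈ coeffRing M :=
  Algebra.subset_adjoin ⟨(i, j), rfl⟩

theorem fg_coeffRing [Finite B] : (Subalgebra.toSubmodule (coeffRing M)).FG :=
  fg_adjoin_of_finite (Set.finite_range _) fun _ ⟨ij, hij⟩ =>
    hij ▸ isIntegral_coxeterCoeff M ij.1 ij.2

/-- The lattice of vectors with coordinates in `coeffRing M`, which is invariant under the geometric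
representation. -/
def coeffLattice : Submodule ℤ (B → ℝ) :=
  Submodule.pi Set.univ fun _ => Subalgebra.toSubmodule (coeffRing M)

theorem mem_coeffLattice {v : B → ℝ} : v ∈ coeffLattice M ↔ ∀ i, v i ∈ coeffRing M := by
  simp only [coeffLattice, Submodule.mem_pi, Set.mem_univ, Subalgebra.mem_toSubmodule, true_imp_iff]

theorem fg_coeffLattice [Finite B] : (coeffLattice M).FG := Submodule.fg_pi fun _ => fg_coeffRing M

variable [DecidableEq B]

theorem simpleRoot_mem_coeffLattice (i : B) : simpleRoot i ∈ coeffLattice M := by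
  refine (mem_coeffLattice M).mpr fun j => ?_
  rcases eq_or_ne j i with rfl | hj
  · rw [simpleRoot_apply_self]
    exact one_mem _
  · rw [simpleRoot_apply_of_ne hj]
    exact zero_mem _

theorem simpleReflection_mem_coeffLattice [Fintype B] (i : B) {v : B → ℝ}
    (hv : v ∈ coeffLattice M) : simpleReflection M i v ∈ coeffLattice M := by
  rw [mem_coeffLattice] at hv ⊢
  intro j
  rw [simpleReflection_apply, simpleCoroot_apply]
  exact sub_mem (hv j) <| mul_mem
    (neg_mem <| sum_mem fun k _ => mul_mem (coxeterCoeff_mem_coeffRing M i k) (hv k))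
    ((mem_coeffLattice M).mp (simpleRoot_mem_coeffLattice M i) j)

end Lattice

section LatticeRepresentation

variable {B : Type*} [DecidableEq B] [Fintype B] {M : CoxeterMatrix B} {W : Type*} [Group W]
  (cs : CoxeterSystem M W)

theorem geometricRep_mem_coeffLattice (w : W) {v : B → ℝ} (hv : v ∈ coeffLattice M) :
    geometricRep cs w v ∈ coeffLattice M := by
  induction w using cs.simple_induction_left with
  | one => rwa [geometricRep_one_apply]
  | mul_simple_left w i ih =>
    rw [geometricRep_mul_apply, geometricRep_simple]
    exact simpleReflection_mem_coeffLattice M i ih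

/-- The restriction of the geometric representation to `coeffLattice M`. -/
noncomputable def latticeRep : W →* Module.End ℤ (coeffLattice M) where
  toFun w := ((geometricRep cs w).toLinearMap.restrictScalars ℤ).restrict
    fun _ hv => geometricRep_mem_coeffLattice cs w hv
  map_one' := LinearMap.ext fun v => Subtype.ext (geometricRep_one_apply cs v)
  map_mul' a b := LinearMap.ext fun v => Subtype.ext (geometricRep_mul_apply cs a b v)

theorem latticeRep_injective : Function.Injective (latticeRep cs) := by
  intro a b hab
  apply geometricRep_injective cs
  refine LinearEquiv.toLinearMap_injective ((Pi.basisFun ℝ B).ext fun i => ?_)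
  rw [Pi.basisFun_apply]
  exact congrArg Subtype.val
    (DFunLike.congr_fun hab ⟨simpleRoot i, simpleRoot_mem_coeffLattice M i⟩)

end LatticeRepresentation

variable {B : Type*} [Finite B] {M : CoxeterMatrix B} {W : Type*} [Group W]

theorem exists_injective_hom_gl_int (cs : CoxeterSystem M W) :
    ∃ (n : ℕ) (ρ : W →* GL (Fin n) ℤ), Function.Injective ρ := by
  classical
  have := Fintype.ofFinite B
  have : Module.Finite ℤ (coeffLattice M) := Module.Finite.iff_fg.mpr (fg_coeffLattice M)
  let toMatrix := (LinearMap.toMatrixAlgEquiv (Module.finBasis ℤ (coeffLattice M))).toMulEquiv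
  let ρ := toMatrix.toMonoidHom.comp (latticeRep cs)
  refine ⟨_, ρ.toHomUnits, fun a b hab => latticeRep_injective cs (toMatrix.injective ?_)⟩
  exact congrArg Units.val hab

theorem virtuallyResiduallyP_of_coxeterSystem (l : ℕ) [Fact l.Prime] (cs : CoxeterSystem M W) :
    VirtuallyResiduallyP l W := by
  obtain ⟨n, ρ, hρ⟩ := exists_injective_hom_gl_int cs
  exact virtuallyResiduallyP_gl_int.of_injective hρ

theorem group_fg_of_coxeterSystem (cs : CoxeterSystem M W) : Group.FG W :=
  Group.fg_iff.mpr ⟨_, cs.subgroup_closure_range_simple, Set.finite_range _⟩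

end Integrality

/-- If `G` is a finitely generated Coxeter group, then `Out(G)` is residually
finite and virtually torsion-free. -/
theorem statement4 (G : Type*) [Group G]
    (hcox : ∃ (B : Type) (_ : Finite B) (M : CoxeterMatrix B), Nonempty (CoxeterSystem M G)) :
    ResiduallyFinite (Out G) ∧
      ∃ O : Subgroup (Out G), O.FiniteIndex ∧ ∀ x : O, IsOfFinOrder x → x = 1 := by
  obtain ⟨B, _, M, ⟨cs⟩⟩ := hcox
  have := group_fg_of_coxeterSystem cs
  have := Nat.fact_prime_two
  have := Nat.fact_prime_three
  have h₂ := virtuallyResiduallyP_of_coxeterSystem 2 cs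
  have h₃ := virtuallyResiduallyP_of_coxeterSystem 3 cs
  have := h₂.residuallyFinite
  obtain ⟨H, hH⟩ := exists_isAutSplitting cs
  obtain ⟨O, hO, htf⟩ := hH.virtuallyTorsionFree_out <|
    virtuallyTorsionFree_mulAut (by decide) h₂ h₃
  exact ⟨residuallyFinite_iff.mpr hH.residuallyFinite_out, O, hO, fun x hx =>
    Subtype.ext (htf x x.2 (Submonoid.isOfFinOrder_coe.mpr hx))⟩
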